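/- Assume F is even and F(s₀) ≠ 0 for some s₀ ∈ ℝ. Let B₁ ⊂ ℝ^N be the unit ball centered at the origin, 𝓕 the strict fundamental domain of G, and define w₀(x) = s₀ Σ_{g∈G} ψ(g) χ_{B₁∩𝓕}(g^{-1}x), where χ denotes the characteristic function. Then w₀ is G-equivariant, i.e. w₀(ḡ^{-1}x) = ψ(ḡ) w₀(x) for every ḡ ∈ G, and Q(w₀) = F(s₀)² Q(χ_{B₁}) = F(s₀)² ∫_{B₁}∫_{B₁} A_α |x−y|^{α−N} dx dy > 0. -/

import Mathlib

open MeasureTheory Real Filter Topology Set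
open scoped RealInnerProductSpace ENNReal

noncomputable section

/-- Euclidean space `ℝ^N`. -/
abbrev Euc (N : ℕ) : Type := EuclideanSpace ℝ (Fin N)

/-- The normalisation constant `A_α` of the Riesz potential. -/
def rieszConst (N : ℕ) (α : ℝ) : ℝ :=
  Real.Gamma (((N : ℝ) - α) / 2) /
    (2 ^ α * Real.pi ^ ((N : ℝ) / 2) * Real.Gamma (α / 2))

/-- The Riesz kernel `I_α(x) = A_α |x|^(α - N)`. -/
def rieszKernel (N : ℕ) (α : ℝ) (x : Euc N) : ℝ :=
  rieszConst N α * ‖x‖ ^ (α - (N : ℝ))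

/-- The Riesz potential `(I_α ∗ v)(x)`. -/
def rieszPot (N : ℕ) (α : ℝ) (v : Euc N → ℝ) (x : Euc N) : ℝ :=
  ∫ y, rieszKernel N α (x - y) * v y

/-- Membership in the Sobolev space `H¹(ℝ^N)`: the function and its gradient are
square integrable. -/
def MemH1 (N : ℕ) (u : Euc N → ℝ) : Prop :=
  MemLp u 2 (volume : Measure (Euc N)) ∧
    MemLp (fun x => gradient u x) 2 (volume : Measure (Euc N))

/-- The `H¹` inner product. -/
def H1inner (N : ℕ) (u v : Euc N → ℝ) : ℝ :=
  ∫ x, (⟪gradient u x, gradient v x⟫ + u x * v x)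

/-- The `H¹` norm. -/
def H1norm (N : ℕ) (u : Euc N → ℝ) : ℝ :=
  Real.sqrt (H1inner N u u)

/-- The nonlocal term `Q(u) = ∫ (I_α ∗ F(u)) F(u)`. -/
def Qterm (N : ℕ) (α : ℝ) (F : ℝ → ℝ) (u : Euc N → ℝ) : ℝ :=
  ∫ x, rieszPot N α (fun y => F (u y)) x * F (u x)

/-- The energy functional of the Choquard equation. -/
def energy (N : ℕ) (α : ℝ) (F : ℝ → ℝ) (u : Euc N → ℝ) : ℝ :=
  (1 / 2) * (∫ x, (‖gradient u x‖ ^ 2 + u x ^ 2)) - (1 / 2) * Qterm N α F u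

/-- The Pohozaev functional. -/
def pohozaev (N : ℕ) (α : ℝ) (F : ℝ → ℝ) (u : Euc N → ℝ) : ℝ :=
  (((N : ℝ) - 2) / 2) * (∫ x, ‖gradient u x‖ ^ 2)
    + ((N : ℝ) / 2) * (∫ x, u x ^ 2)
    - (((N : ℝ) + α) / 2) * Qterm N α F u

/-- The action of the derivative `E'(u)` on a test function `φ`. -/
def energyDeriv (N : ℕ) (α : ℝ) (F : ℝ → ℝ) (u φ : Euc N → ℝ) : ℝ :=
  (∫ x, (⟪gradient u x, gradient φ x⟫ + u x * φ x))
    - ∫ x, rieszPot N α (fun y => F (u y)) x * deriv F (u x) * φ x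

/-- `u` is a weak solution of the Choquard equation `-Δu + u = (I_α ∗ F(u)) f(u)`,
with `f = F'`. -/
def IsWeakSolution (N : ℕ) (α : ℝ) (F : ℝ → ℝ) (u : Euc N → ℝ) : Prop :=
  ∀ φ : Euc N → ℝ, ContDiff ℝ (⊤ : ℕ∞) φ → HasCompactSupport φ →
    energyDeriv N α F u φ = 0

/-- `u` is nontrivial: not almost everywhere zero. -/
def Nontriv (N : ℕ) (u : Euc N → ℝ) : Prop :=
  ¬ u =ᵐ[(volume : Measure (Euc N))] (fun _ => 0)

/-- Assumption (F0): `F(s₀) ≠ 0` for some `s₀`. -/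
def CondF0 (F : ℝ → ℝ) : Prop := ∃ s₀ : ℝ, F s₀ ≠ 0

/-- Assumption (F1): `lim_{s → 0} f(s)/s = μ ∈ [0, ∞)`, `f = F'`. -/
def CondF1 (F : ℝ → ℝ) : Prop :=
  ∃ μ : ℝ, 0 ≤ μ ∧ Tendsto (fun s => deriv F s / s) (𝓝[≠] (0 : ℝ)) (𝓝 μ)

/-- Assumption (F2): subcritical growth of `F` at infinity. -/
def CondF2 (N : ℕ) (α : ℝ) (F : ℝ → ℝ) : Prop :=
  (3 ≤ N →
    Tendsto (fun s => F s / |s| ^ (((N : ℝ) + α) / ((N : ℝ) - 2)))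
      (cocompact ℝ) (𝓝 0)) ∧
  (N = 2 → ∃ p : ℝ, 2 ≤ p ∧
    Tendsto (fun s => F s / |s| ^ p) (cocompact ℝ) (𝓝 0))

/-- Assumption (F1′): `lim_{s → 0⁺} f(s)/s^{r-1} = μ ∈ [0, ∞)` for some `r > 2`, and
`s ↦ f(s)/|s|` is increasing on `ℝ ∖ {0}`. -/
def CondF1' (F : ℝ → ℝ) : Prop :=
  (∃ r : ℝ, 2 < r ∧ ∃ μ : ℝ, 0 ≤ μ ∧
    Tendsto (fun s => deriv F s / s ^ (r - 1)) (𝓝[>] (0 : ℝ)) (𝓝 μ)) ∧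
  StrictMonoOn (fun s => deriv F s / |s|) {s : ℝ | s ≠ 0}

/-- Assumption (F2′): `lim_{|s| → ∞} F(s)/|s|^p = 0` for some `p ∈ (2, (N+α)/(N-2))`
(`(N+α)/(N-2) = ∞` when `N = 2`). -/
def CondF2' (N : ℕ) (α : ℝ) (F : ℝ → ℝ) : Prop :=
  ∃ p : ℝ, 2 < p ∧ (3 ≤ N → p < ((N : ℝ) + α) / ((N : ℝ) - 2)) ∧
    Tendsto (fun s => F s / |s| ^ p) (cocompact ℝ) (𝓝 0)

/-- A finite Coxeter group of rank `k` acting on `ℝ^N = ℝ^k × ℝ^{N-k}` by reflections,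
together with the sign character `ψ` (the unique epimorphism onto `{±1}` sending each
Coxeter generator to `-1`) and the strict fundamental domain property of the closed
chamber `{x | ∀ s ∈ S, ⟪x, vec s⟫ ≥ 0}`. -/
structure CoxeterAction (N k : ℕ) where
  G : Subgroup (Euc N ≃ₗᵢ[ℝ] Euc N)
  S : Finset (Euc N ≃ₗᵢ[ℝ] Euc N)
  finiteG : (G : Set (Euc N ≃ₗᵢ[ℝ] Euc N)).Finite
  rank_eq : S.card = k
  S_subset : (S : Set (Euc N ≃ₗᵢ[ℝ] Euc N)) ⊆ (G : Set (Euc N ≃ₗᵢ[ℝ] Euc N))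
  gen : Subgroup.closure (S : Set (Euc N ≃ₗᵢ[ℝ] Euc N)) = G
  vec : (Euc N ≃ₗᵢ[ℝ] Euc N) → Euc N
  vec_norm : ∀ s ∈ S, ‖vec s‖ = 1
  vec_coord : ∀ s ∈ S, ∀ i : Fin N, k ≤ (i : ℕ) → vec s i = 0
  refl_eq : ∀ s ∈ S, ∀ x : Euc N, s x = x - (2 * ⟪x, vec s⟫) • vec s
  ψ : (Euc N ≃ₗᵢ[ℝ] Euc N) → ℝ
  ψ_mul : ∀ g ∈ G, ∀ h ∈ G, ψ (g * h) = ψ g * ψ h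
  ψ_gen : ∀ s ∈ S, ψ s = -1
  ψ_pm : ∀ g ∈ G, ψ g = 1 ∨ ψ g = -1
  isFund : ∀ x : Euc N, ∃! y : Euc N,
    (∀ s ∈ S, 0 ≤ ⟪y, vec s⟫) ∧ ∃ g ∈ G, g x = y

/-- The symmetric subspace `H_G ⊆ H¹(ℝ^N)` of `G`-equivariant functions. -/
def MemHG {N k : ℕ} (C : CoxeterAction N k) (u : Euc N → ℝ) : Prop :=
  MemH1 N u ∧ ∀ g ∈ C.G, ∀ x : Euc N, u (g⁻¹ x) = C.ψ g * u x

/-- `H_G` as a set of functions. -/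
def HGset {N k : ℕ} (C : CoxeterAction N k) : Set (Euc N → ℝ) := {u | MemHG C u}

/-- `H¹(ℝ^N)` as a set of functions. -/
def H1set (N : ℕ) : Set (Euc N → ℝ) := {u | MemH1 N u}

/-- Continuity of a path of functions with respect to the `H¹` distance, on a set
of parameters. -/
def H1ContOn (N : ℕ) (γ : ℝ → Euc N → ℝ) (A : Set ℝ) : Prop :=
  ∀ t ∈ A, ∀ ε > 0, ∃ δ > 0, ∀ t' ∈ A, |t' - t| < δ →
    H1norm N (fun x => γ t' x - γ t x) < ε

/-- The mountain pass level of the Choquard energy over a class `X` of functions: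
the infimum, over `H¹`-continuous paths in `X` joining `0` to a function of negative
energy, of the maximum of the energy along the path. -/
def mpLevel (N : ℕ) (α : ℝ) (F : ℝ → ℝ) (X : Set (Euc N → ℝ)) : ℝ :=
  sInf { c : ℝ | ∃ γ : ℝ → Euc N → ℝ,
    (∀ t ∈ Icc (0 : ℝ) 1, γ t ∈ X) ∧
    H1ContOn N γ (Icc 0 1) ∧
    γ 0 = (fun _ => 0) ∧
    energy N α F (γ 1) < 0 ∧
    c = sSup ((fun t => energy N α F (γ t)) '' Icc (0 : ℝ) 1) }

/-- The mountain pass level `c_G` over the symmetric subspace `H_G`. -/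
def cG {N k : ℕ} (α : ℝ) (F : ℝ → ℝ) (C : CoxeterAction N k) : ℝ :=
  mpLevel N α F (HGset C)

/-- The strict fundamental domain (closed chamber) of the Coxeter group. -/
def fund {N k : ℕ} (C : CoxeterAction N k) : Set (Euc N) :=
  {x | ∀ s ∈ C.S, 0 ≤ ⟪x, C.vec s⟫}

/-- The facet `∂^i 𝓕`: points of the chamber lying on exactly `i` walls. -/
def facet {N k : ℕ} (C : CoxeterAction N k) (i : ℕ) : Set (Euc N) :=
  {q | q ∈ fund C ∧
    {s | s ∈ C.S ∧ ⟪q, C.vec s⟫ = 0}.ncard = i}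

/-- The symmetric class associated with the isotropy subgroup `S_q = {g ∈ G : g q = q}`. -/
def stabSet {N k : ℕ} (C : CoxeterAction N k) (q : Euc N) : Set (Euc N → ℝ) :=
  {u | MemH1 N u ∧ ∀ g ∈ C.G, g q = q → ∀ x : Euc N, u (g⁻¹ x) = C.ψ g * u x}

/-- The mountain pass level `c_{S_q}` associated with the isotropy subgroup of `q`. -/
def cStab {N k : ℕ} (α : ℝ) (F : ℝ → ℝ) (C : CoxeterAction N k) (q : Euc N) : ℝ :=
  mpLevel N α F (stabSet C q)

/-- The cardinality `|Gq|` of the orbit of `q` under `G`. -/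
def orbCard {N k : ℕ} (C : CoxeterAction N k) (q : Euc N) : ℕ :=
  ((fun g : Euc N ≃ₗᵢ[ℝ] Euc N => g q) '' (C.G : Set (Euc N ≃ₗᵢ[ℝ] Euc N))).ncard

/-!
Each `g ≠ 1` in `G` fixes only a proper subspace of `ℝ^N`, so almost every point has trivial
stabiliser. Exactly one `g ∈ G` carries such a point to the chamber, and the sum defining `w₀` then
has a single nonzero term: `w₀ = ± s₀` almost everywhere on `B₁`, while `w₀ = 0` off `B₁`. The
nonlinearity does not see the sign, so `F ∘ w₀ = F(s₀) χ_{B₁}` almost everywhere, which reduces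
`Q(w₀)` to a double integral of the Riesz kernel. Positivity of the latter needs local integrability
of the kernel as well as its positivity, since a divergent Bochner integral is `0`.
-/

section Integrals

theorem integral_pos_of_ae_pos {X : Type*} [MeasurableSpace X] {μ : Measure X} [NeZero μ]
    {f : X → ℝ} (hf : Integrable f μ) (hpos : ∀ᵐ x ∂μ, 0 < f x) : 0 < ∫ x, f x ∂μ := by
  refine (integral_nonneg_of_ae (hpos.mono fun _ => le_of_lt)).lt_of_ne' fun h => ?_
  have hzero := (integral_eq_zero_iff_of_nonneg_ae (hpos.mono fun _ => le_of_lt) hf).1 h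
  obtain ⟨x, hx, hx0⟩ := (hpos.and hzero).exists
  exact hx.ne' hx0

variable {G : Type*} [AddGroup G] [MeasurableSpace G] [MeasurableAdd₂ G] [MeasurableNeg G]
  {μ ν : Measure G} [SFinite μ] [SFinite ν] [μ.IsAddRightInvariant] {s t u : Set G}

theorem integrableOn_prod_comp_sub {E : Type*} [NormedAddCommGroup E] {f : G → E}
    (hu : MeasurableSet u) (hf : IntegrableOn f u μ) (ht : MeasurableSet t) (htν : ν t ≠ ∞)
    (hst : ∀ x ∈ s, ∀ y ∈ t, x - y ∈ u) :
    IntegrableOn (fun p : G × G => f (p.1 - p.2)) (s ×ˢ t) (μ.prod ν) := by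
  have : Fact (ν t < ∞) := ⟨htν.lt_top⟩
  have hprod : IntegrableOn (fun p : G × G => f p.1) (u ×ˢ t) (μ.prod ν) := by
    rw [IntegrableOn, ← Measure.prod_restrict]
    exact hf.integrable.comp_fst _
  have hshear := (measurePreserving_sub_prod μ ν).restrict_preimage (hu.prod ht)
  refine IntegrableOn.mono_set (hshear.integrable_comp_of_integrable hprod) ?_
  exact fun p hp => ⟨hst _ hp.1 _ hp.2, hp.2⟩

theorem setIntegral_setIntegral_comp_sub_pos {f : G → ℝ}
    (hu : MeasurableSet u) (hf : IntegrableOn f u μ) (hpos : ∀ᵐ x ∂μ, 0 < f x)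
    (ht : MeasurableSet t) (hsμ : μ s ≠ 0) (htν₀ : ν t ≠ 0) (htν : ν t ≠ ∞)
    (hst : ∀ x ∈ s, ∀ y ∈ t, x - y ∈ u) :
    0 < ∫ x in s, ∫ y in t, f (x - y) ∂ν ∂μ := by
  have hint := integrableOn_prod_comp_sub hu hf ht htν hst
  have : NeZero ((μ.prod ν).restrict (s ×ˢ t)) := by
    refine ⟨fun h => ?_⟩
    rw [Measure.restrict_eq_zero, Measure.prod_prod] at h
    exact mul_ne_zero hsμ htν₀ h
  rw [← setIntegral_prod _ hint]
  exact integral_pos_of_ae_pos hint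
    (ae_restrict_of_ae ((quasiMeasurePreserving_sub_of_right_invariant μ ν).ae hpos))

theorem ae_linearMap_ne {E F : Type*} [NormedAddCommGroup E] [NormedSpace ℝ E]
    [FiniteDimensional ℝ E] [MeasurableSpace E] [BorelSpace E] [AddCommGroup F] [Module ℝ F]
    (μ : Measure E) [μ.IsAddHaarMeasure] {f g : E →ₗ[ℝ] F} (hfg : f ≠ g) :
    ∀ᵐ x ∂μ, f x ≠ g x := by
  have hnull := Measure.addHaar_submodule μ (LinearMap.eqLocus f g)
    fun h => hfg (LinearMap.eqLocus_eq_top.1 h)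
  exact measure_eq_zero_iff_ae_notMem.1 hnull

end Integrals

section Riesz

variable {N : ℕ} {α : ℝ}

theorem rieszConst_pos (hα0 : 0 < α) (hαN : α < (N : ℝ)) : 0 < rieszConst N α := by
  have hnum : 0 < Real.Gamma (((N : ℝ) - α) / 2) := Real.Gamma_pos_of_pos (by linarith)
  have hden : 0 < Real.Gamma (α / 2) := Real.Gamma_pos_of_pos (by linarith)
  exact div_pos hnum (mul_pos (by positivity) hden)

theorem rieszKernel_pos (hα0 : 0 < α) (hαN : α < (N : ℝ)) {x : Euc N} (hx : x ≠ 0) :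
    0 < rieszKernel N α x :=
  mul_pos (rieszConst_pos hα0 hαN) (Real.rpow_pos_of_pos (norm_pos_iff.2 hx) _)

theorem locallyIntegrable_rieszKernel (hN : 1 ≤ N) (hα0 : 0 < α) :
    LocallyIntegrable (rieszKernel N α) := by
  refine locallyIntegrable_of_norm_le_rpow (C := |rieszConst N α|) (α := N - α) ?_ ?_ ?_ ?_
  · simpa only [finrank_euclideanSpace_fin] using hN
  · simpa only [finrank_euclideanSpace_fin] using sub_lt_self (N : ℝ) hα0
  · refine Eventually.of_forall fun x => ?_
    rw [rieszKernel, norm_mul, Real.norm_eq_abs, neg_sub,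
      Real.norm_of_nonneg (Real.rpow_nonneg (norm_nonneg x) _)]
  · have hmeas : Measurable (rieszKernel N α) := by unfold rieszKernel; fun_prop
    exact hmeas.aestronglyMeasurable

theorem setIntegral_setIntegral_ball_rieszKernel_pos (hα0 : 0 < α) (hαN : α < (N : ℝ))
    {r : ℝ} (hr : 0 < r) :
    0 < ∫ x in Metric.ball (0 : Euc N) r,
      ∫ y in Metric.ball (0 : Euc N) r, rieszKernel N α (x - y) := by
  have hN : 1 ≤ N := Nat.cast_pos.1 (hα0.trans hαN)
  have : NeZero N := ⟨Nat.one_le_iff_ne_zero.1 hN⟩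
  have hball : volume (Metric.ball (0 : Euc N) r) ≠ 0 := (Metric.measure_ball_pos _ _ hr).ne'
  have hint : IntegrableOn (rieszKernel N α) (Metric.closedBall 0 (r + r)) :=
    (locallyIntegrable_rieszKernel hN hα0).integrableOn_isCompact (isCompact_closedBall _ _)
  have hpos : ∀ᵐ x : Euc N, 0 < rieszKernel N α x :=
    (Measure.ae_ne volume 0).mono fun x => rieszKernel_pos hα0 hαN
  refine setIntegral_setIntegral_comp_sub_pos measurableSet_closedBall hint hpos
    measurableSet_ball hball hball measure_ball_lt_top.ne fun x hx y hy => ?_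
  rw [mem_ball_zero_iff] at hx hy
  exact mem_closedBall_zero_iff.2 ((norm_sub_le x y).trans (add_le_add hx.le hy.le))

theorem Qterm_of_comp_ae_eq_indicator {F : ℝ → ℝ} {u : Euc N → ℝ} {A : Set (Euc N)} {c : ℝ}
    (hA : MeasurableSet A) (hu : (fun x => F (u x)) =ᵐ[volume] A.indicator fun _ => c) :
    Qterm N α F u = c ^ 2 * ∫ x in A, ∫ y in A, rieszKernel N α (x - y) := by
  have hmul (k : Euc N → ℝ) : ∫ x, k x * F (u x) = c * ∫ x in A, k x := by
    rw [← integral_const_mul, ← integral_indicator hA]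
    refine integral_congr_ae (hu.mono fun x hx => ?_)
    simp only [hx, indicator, mul_ite, mul_zero, mul_comm]
  simp only [Qterm, rieszPot, hmul, integral_const_mul, sq, mul_assoc]

end Riesz

namespace CoxeterAction

variable {N k : ℕ} (C : CoxeterAction N k)

theorem abs_ψ {g : Euc N ≃ₗᵢ[ℝ] Euc N} (hg : g ∈ C.G) : |C.ψ g| = 1 :=
  (abs_eq zero_le_one).2 (C.ψ_pm g hg)

/-- The `ψ`-isotypic sum `x ↦ ∑_{g ∈ G} ψ(g) f(g⁻¹ x)` of the translates of `f`: the standard way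
to produce a `G`-equivariant function from an arbitrary one. -/
def signedSum (f : Euc N → ℝ) (x : Euc N) : ℝ :=
  ∑ᶠ g ∈ (C.G : Set (Euc N ≃ₗᵢ[ℝ] Euc N)), C.ψ g * f (g⁻¹ x)

theorem signedSum_inv_apply (f : Euc N → ℝ) {g : Euc N ≃ₗᵢ[ℝ] Euc N} (hg : g ∈ C.G) (x : Euc N) :
    C.signedSum f (g⁻¹ x) = C.ψ g * C.signedSum f x := by
  have hψ : C.ψ g * C.ψ g = 1 := by rw [← abs_mul_abs_self, C.abs_ψ hg, one_mul]
  have hbij : BijOn (g * ·) (C.G : Set (Euc N ≃ₗᵢ[ℝ] Euc N)) C.G :=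
    ⟨fun h hh => C.G.mul_mem hg hh, (mul_right_injective g).injOn,
      fun h hh => ⟨g⁻¹ * h, C.G.mul_mem (C.G.inv_mem hg) hh, mul_inv_cancel_left g h⟩⟩
  rw [signedSum, signedSum, mul_finsum_mem]
  refine finsum_mem_eq_of_bijOn _ hbij fun h hh => ?_
  have hinv : (g * h)⁻¹ x = h⁻¹ (g⁻¹ x) := by rw [mul_inv_rev]; rfl
  rw [hinv, C.ψ_mul g hg h hh, ← mul_assoc, ← mul_assoc, hψ, one_mul]

theorem ae_eq_one_of_apply_eq : ∀ᵐ x : Euc N, ∀ g ∈ C.G, g x = x → g = 1 := by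
  refine (ae_ball_iff C.finiteG.countable).2 fun g _ => ?_
  by_cases hg : g = 1
  · exact Eventually.of_forall fun _ _ => hg
  · have hne : g.toLinearEquiv.toLinearMap ≠ LinearMap.id := fun h =>
      hg (LinearIsometryEquiv.ext (LinearMap.congr_fun h))
    exact (ae_linearMap_ne volume hne).mono fun x hx hgx => absurd hgx hx

variable {C} in
theorem existsUnique_inv_apply_mem_fund {x : Euc N} (hx : ∀ g ∈ C.G, g x = x → g = 1) :
    ∃! g, g ∈ C.G ∧ g⁻¹ x ∈ fund C := by
  obtain ⟨y, ⟨hy, g, hg, rfl⟩, hunique⟩ := C.isFund x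
  refine ⟨g⁻¹, ⟨C.G.inv_mem hg, by rwa [inv_inv]⟩, fun h ⟨hh, hhx⟩ => ?_⟩
  have heq : h⁻¹ x = g x := hunique _ ⟨hhx, h⁻¹, C.G.inv_mem hh, rfl⟩
  have hfix : (h * g) x = x := by
    change h (g x) = x
    rw [← heq]
    exact h.apply_symm_apply x
  exact eq_inv_of_mul_eq_one_left (hx _ (C.G.mul_mem hh hg) hfix)

variable {C} in
theorem signedSum_indicator_fund {x : Euc N} (hx : ∀ g ∈ C.G, g x = x → g = 1) (f : Euc N → ℝ)
    {g : Euc N ≃ₗᵢ[ℝ] Euc N} (hg : g ∈ C.G) (hgx : g⁻¹ x ∈ fund C) :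
    C.signedSum ((fund C).indicator f) x = C.ψ g * f (g⁻¹ x) := by
  classical
  rw [signedSum, finsum_eq_single _ g, finsum_eq_if, if_pos (SetLike.mem_coe.2 hg),
    indicator_of_mem hgx]
  refine fun h hne => (finsum_eq_if).trans (ite_eq_right_iff.2 fun hh => ?_)
  have hnot : h⁻¹ x ∉ fund C := fun hhx =>
    hne ((existsUnique_inv_apply_mem_fund hx).unique ⟨hh, hhx⟩ ⟨hg, hgx⟩)
  rw [indicator_of_notMem hnot, mul_zero]

theorem ae_abs_signedSum_indicator_fund {f : Euc N → ℝ} (hf : ∀ g ∈ C.G, ∀ x, f (g x) = f x) :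
    ∀ᵐ x, |C.signedSum ((fund C).indicator f) x| = |f x| := by
  filter_upwards [C.ae_eq_one_of_apply_eq] with x hx
  obtain ⟨g, ⟨hg, hgx⟩, -⟩ := existsUnique_inv_apply_mem_fund hx
  rw [signedSum_indicator_fund hx f hg hgx, hf _ (C.G.inv_mem hg), abs_mul, C.abs_ψ hg, one_mul]

/-- The function `w₀ = s₀ ∑_{g ∈ G} ψ(g) χ_{B₁ ∩ 𝓕}(g⁻¹ ·)`, on which the nonlocal term is
positive. -/
def testFunction (s₀ : ℝ) (x : Euc N) : ℝ :=
  s₀ * C.signedSum ((Metric.ball 0 1 ∩ fund C).indicator fun _ => 1) x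

theorem testFunction_inv_apply (s₀ : ℝ) {g : Euc N ≃ₗᵢ[ℝ] Euc N} (hg : g ∈ C.G) (x : Euc N) :
    C.testFunction s₀ (g⁻¹ x) = C.ψ g * C.testFunction s₀ x := by
  rw [testFunction, C.signedSum_inv_apply _ hg, testFunction, mul_left_comm]

theorem comp_testFunction_ae_eq {F : ℝ → ℝ} {s₀ : ℝ} (hF0 : F 0 = 0) (hFs₀ : F (-s₀) = F s₀) :
    (fun x => F (C.testFunction s₀ x)) =ᵐ[volume]
      (Metric.ball (0 : Euc N) 1).indicator fun _ => F s₀ := by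
  have hball : ∀ g ∈ C.G, ∀ x, (Metric.ball (0 : Euc N) 1).indicator (fun _ => (1 : ℝ)) (g x) =
      (Metric.ball (0 : Euc N) 1).indicator (fun _ => 1) x := fun g _ x => by
    simp only [indicator, mem_ball_zero_iff, LinearIsometryEquiv.norm_map]
  filter_upwards [C.ae_abs_signedSum_indicator_fund hball] with x hx
  rw [indicator_indicator, inter_comm] at hx
  by_cases hxB : x ∈ Metric.ball (0 : Euc N) 1
  · rw [indicator_of_mem hxB, abs_one, abs_eq zero_le_one] at hx
    rcases hx with hx | hx <;>
      simp only [testFunction, hx, mul_one, mul_neg, hFs₀, indicator_of_mem hxB]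
  · rw [indicator_of_notMem hxB, abs_zero, abs_eq_zero] at hx
    simp only [testFunction, hx, mul_zero, hF0, indicator_of_notMem hxB]

end CoxeterAction

theorem equivariant_test_function_general {N k : ℕ} {α : ℝ} {F : ℝ → ℝ}
    (hα0 : 0 < α) (hαN : α < (N : ℝ)) (C : CoxeterAction N k) {s₀ : ℝ}
    (hF0 : F 0 = 0) (hFs₀ : F (-s₀) = F s₀) (hs₀ : F s₀ ≠ 0) :
    (∀ g ∈ C.G, ∀ x : Euc N, C.testFunction s₀ (g⁻¹ x) = C.ψ g * C.testFunction s₀ x) ∧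
    Qterm N α F (C.testFunction s₀) = F s₀ ^ 2 *
      (∫ x in Metric.ball (0 : Euc N) 1,
        ∫ y in Metric.ball (0 : Euc N) 1, rieszKernel N α (x - y)) ∧
    0 < Qterm N α F (C.testFunction s₀) := by
  have hQ := Qterm_of_comp_ae_eq_indicator (α := α) measurableSet_ball
    (C.comp_testFunction_ae_eq hF0 hFs₀)
  refine ⟨fun g hg x => C.testFunction_inv_apply s₀ hg x, hQ, ?_⟩
  rw [hQ]
  exact mul_pos (sq_pos_of_ne_zero hs₀)
      (setIntegral_setIntegral_ball_rieszKernel_pos hα0 hαN one_pos)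

/-- The `G`-equivariant test function `w₀` built from the
characteristic function of `B₁ ∩ 𝓕` satisfies `w₀(ḡ⁻¹x) = ψ(ḡ) w₀(x)` and
`Q(w₀) = F(s₀)² ∫_{B₁}∫_{B₁} A_α |x-y|^{α-N} > 0`. -/
theorem equivariant_test_function (N k : ℕ) (α : ℝ) (F : ℝ → ℝ)
    (hN : 2 ≤ N) (hα0 : 0 < α) (hαN : α < (N : ℝ))
    (hk1 : 1 ≤ k) (hkN : k ≤ N) (C : CoxeterAction N k)
    (hFeven : ∀ s : ℝ, F (-s) = F s) (hF00 : F 0 = 0)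
    (s₀ : ℝ) (hs₀ : F s₀ ≠ 0)
    (w₀ : Euc N → ℝ)
    (hw₀ : ∀ x : Euc N, w₀ x =
      s₀ * ∑ᶠ g ∈ (C.G : Set (Euc N ≃ₗᵢ[ℝ] Euc N)),
        C.ψ g * Set.indicator (Metric.ball (0 : Euc N) 1 ∩ fund C)
          (fun _ => (1 : ℝ)) (g⁻¹ x)) :
    (∀ g ∈ C.G, ∀ x : Euc N, w₀ (g⁻¹ x) = C.ψ g * w₀ x) ∧
    Qterm N α F w₀ = F s₀ ^ 2 *
      (∫ x in Metric.ball (0 : Euc N) 1,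
        ∫ y in Metric.ball (0 : Euc N) 1, rieszKernel N α (x - y)) ∧
    0 < Qterm N α F w₀ := by
  obtain rfl : w₀ = C.testFunction s₀ := funext hw₀
  exact equivariant_test_function_general hα0 hαN C hF00 (hFeven s₀) hs₀

end
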